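/- Let α be a non-zero pre-homogeneous dimension vector of Q, let σ be either ⟨α,·⟩ or −⟨·,α⟩, and let E_1,…,E_l be the pairwise non-isomorphic σ-stable representations, with β_i = dim E_i. Then, after rearranging, (β_1,…,β_l) is a quiver exceptional sequence. -/

import Mathlib

set_option autoImplicit false

noncomputable section

open scoped BigOperators

/-! Basic setup for representations of a quiver with vertex set `V`, arrow set `A`,
tail map `t` and head map `h`, over a field `K`. -/

variable (K : Type) [Field K]
variable {V A : Type} [Fintype V] [DecidableEq V] [Fintype A]

/-- The Euler form of the quiver `(V, A, t, h)`. -/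
def eulerForm {R : Type} [CommRing R] (t h : A → V) (x y : V → R) : R :=
  ∑ i, x i * y i - ∑ a, x (t a) * y (h a)

def natZ (x : V → ℕ) : V → ℤ := fun i => (x i : ℤ)
def intQ (x : V → ℤ) : V → ℚ := fun i => (x i : ℚ)
def natQ (x : V → ℕ) : V → ℚ := fun i => (x i : ℚ)

/-- The weight `⟨α,·⟩`. -/
def weightL (t h : A → V) (α : V → ℤ) : V → ℤ :=
  fun i => eulerForm t h α (fun j => if j = i then 1 else 0)

/-- The weight `−⟨·,α⟩`. -/
def weightR (t h : A → V) (α : V → ℤ) : V → ℤ :=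
  fun i => - eulerForm t h (fun j => if j = i then 1 else 0) α

/-- `IsPathFrom t h i p j` : the list of arrows `p` is a path from `i` to `j`. -/
def IsPathFrom (t h : A → V) : V → List A → V → Prop
  | i, [], j => i = j
  | i, a :: p, j => t a = i ∧ IsPathFrom t h (h a) p j

/-- The quiver has no (nontrivial) oriented cycles. -/
def Acyclic (t h : A → V) : Prop := ∀ (i : V) (p : List A), IsPathFrom t h i p i → p = []

/-- The dimension vector `γ_i` of the projective indecomposable at `i`:
`γ_i(j)` is the number of paths from `i` to `j`. -/
def gammaRoot (t h : A → V) (i : V) : V → ℕ :=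
  fun j => Set.ncard {p : List A | IsPathFrom t h i p j}

/-- A finite-dimensional representation of the quiver `(V, A, t, h)` over `K`. -/
structure QuivRep (K : Type) [Field K] (V A : Type) (t h : A → V) : Type 1 where
  sp : V → Type
  [inst1 : ∀ i, AddCommGroup (sp i)]
  [inst2 : ∀ i, Module K (sp i)]
  [inst3 : ∀ i, FiniteDimensional K (sp i)]
  map : ∀ a : A, sp (t a) →ₗ[K] sp (h a)

attribute [instance] QuivRep.inst1 QuivRep.inst2 QuivRep.inst3

namespace QuivRep

variable {K} {t h : A → V}

/-- The dimension vector of a representation. -/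
def dimVec (X : QuivRep K V A t h) : V → ℕ := fun i => Module.finrank K (X.sp i)

/-- A subrepresentation. -/
structure Sub (X : QuivRep K V A t h) where
  sub : ∀ i, Submodule K (X.sp i)
  le : ∀ a : A, ∀ x ∈ sub (t a), X.map a x ∈ sub (h a)

/-- The dimension vector of a subrepresentation. -/
def Sub.dimVec {X : QuivRep K V A t h} (U : Sub X) : V → ℕ :=
  fun i => Module.finrank K (U.sub i)

/-- The space `Hom_Q(X,Y)` of morphisms of representations, as a submodule of
`Π i, Hom_K(X(i),Y(i))`. -/
def homS (X Y : QuivRep K V A t h) : Submodule K (∀ i, X.sp i →ₗ[K] Y.sp i) where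
  carrier := {φ | ∀ a : A, (φ (h a)).comp (X.map a) = (Y.map a).comp (φ (t a))}
  zero_mem' := by intro a; simp
  add_mem' := by
    intro f g hf hg a
    simp only [Pi.add_apply, LinearMap.add_comp, LinearMap.comp_add, hf a, hg a]
  smul_mem' := by
    intro c f hf a
    simp only [Pi.smul_apply, LinearMap.smul_comp, LinearMap.comp_smul, hf a]

/-- The dimension of `Hom_Q(X,Y)`. -/
def homDim (X Y : QuivRep K V A t h) : ℕ := Module.finrank K (homS X Y)

/-- The map `d^X_Y` from Ringel's canonical exact sequence. -/
def dmap (X Y : QuivRep K V A t h) :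
    (∀ i, X.sp i →ₗ[K] Y.sp i) →ₗ[K] (∀ a : A, X.sp (t a) →ₗ[K] Y.sp (h a)) where
  toFun φ := fun a => (φ (h a)).comp (X.map a) - (Y.map a).comp (φ (t a))
  map_add' f g := by
    funext a
    simp only [Pi.add_apply, LinearMap.add_comp, LinearMap.comp_add]
    abel
  map_smul' c f := by
    funext a
    simp only [Pi.smul_apply, LinearMap.smul_comp, LinearMap.comp_smul, smul_sub,
      RingHom.id_apply]

/-- The dimension of `Ext^1_Q(X,Y)`, i.e. of the cokernel of `d^X_Y`. -/
def extDim (X Y : QuivRep K V A t h) : ℕ :=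
  Module.finrank K ((∀ a : A, X.sp (t a) →ₗ[K] Y.sp (h a)) ⧸ LinearMap.range (dmap X Y))

/-- A rigid representation: `Ext^1_Q(X,X) = 0`. -/
def IsRigid (X : QuivRep K V A t h) : Prop := extDim X X = 0

/-- A Schur representation: `End_Q(X) = K·id`. -/
def IsSchur (X : QuivRep K V A t h) : Prop := homDim X X = 1

/-- An exceptional representation: rigid and Schur. -/
def IsExceptional (X : QuivRep K V A t h) : Prop := IsRigid X ∧ IsSchur X

end QuivRep

/-- `β` is a real Schur root: the dimension vector of an exceptional representation. -/
def isRealSchurRoot (t h : A → V) (β : V → ℕ) : Prop :=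
  ∃ X : QuivRep K V A t h, X.dimVec = β ∧ X.IsExceptional

/-- `ext_Q(α,β)` : the generic (minimal) value of `dim Ext^1_Q` on pairs of
representations of dimension vectors `α`, `β`. -/
def extMin (t h : A → V) (α β : V → ℕ) : ℕ :=
  sInf {n | ∃ X Y : QuivRep K V A t h, X.dimVec = α ∧ Y.dimVec = β ∧ QuivRep.extDim X Y = n}

/-- `hom_Q(α,β)` : the generic (minimal) value of `dim Hom_Q`. -/
def homMin (t h : A → V) (α β : V → ℕ) : ℕ :=
  sInf {n | ∃ X Y : QuivRep K V A t h, X.dimVec = α ∧ Y.dimVec = β ∧ QuivRep.homDim X Y = n}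

/-- `β' ↪ β` : every representation of dimension vector `β` has a subrepresentation of
dimension vector `β'`. -/
def Embeds (t h : A → V) (β' β : V → ℕ) : Prop :=
  ∀ X : QuivRep K V A t h, X.dimVec = β → ∃ U : QuivRep.Sub X, U.dimVec = β'

/-- `σ`-semi-stability of a representation. -/
def IsSemistable {t h : A → V} (σ : V → ℤ) (X : QuivRep K V A t h) : Prop :=
  (∑ i, σ i * (X.dimVec i : ℤ)) = 0 ∧
  ∀ U : QuivRep.Sub X, (∑ i, σ i * (U.dimVec i : ℤ)) ≤ 0

/-- `σ`-stability of a representation. -/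
def IsStable {t h : A → V} (σ : V → ℤ) (X : QuivRep K V A t h) : Prop :=
  (∑ i, σ i * (X.dimVec i : ℤ)) = 0 ∧ X.dimVec ≠ (fun _ => 0) ∧
  ∀ U : QuivRep.Sub X, U.dimVec ≠ (fun _ => 0) → U.dimVec ≠ X.dimVec →
    (∑ i, σ i * (U.dimVec i : ℤ)) < 0

/-- Isomorphism of representations. -/
def RepIso {t h : A → V} (X Y : QuivRep K V A t h) : Prop :=
  ∃ e : ∀ i, X.sp i ≃ₗ[K] Y.sp i,
    ∀ (a : A) (x : X.sp (t a)), e (h a) (X.map a x) = Y.map a (e (t a) x)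

/-- A quiver exceptional sequence of dimension vectors. -/
def IsQES (t h : A → V) {l : ℕ} (b : Fin l → V → ℕ) : Prop :=
  (∀ j, isRealSchurRoot K t h (b j)) ∧
  ∀ i j : Fin l, i < j →
    homMin K t h (b i) (b j) = 0 ∧ extMin K t h (b i) (b j) = 0 ∧
      eulerForm t h (natZ (b j)) (natZ (b i)) ≤ 0

/-- The cone of nonnegative rational linear combinations of a finite set of integral
vectors. -/
def coneOf (C : Finset (V → ℤ)) : Set (V → ℚ) :=
  {x | ∃ lam : (V → ℤ) → ℚ, (∀ c, 0 ≤ lam c) ∧ x = ∑ c ∈ C, lam c • intQ c}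

/-- A compatible subset of the set `Ψ(Q)_{≥ -1}` of almost positive real Schur roots. -/
def IsCompatible (t h : A → V) (C : Finset (V → ℤ)) : Prop :=
  (∀ x ∈ C, (∃ β : V → ℕ, isRealSchurRoot K t h β ∧ x = natZ β) ∨
      (∃ i : V, x = fun j => -(gammaRoot t h i j : ℤ))) ∧
  (∀ x ∈ C, ∀ y ∈ C, x ≠ y →
    (∀ β₁ β₂ : V → ℕ, isRealSchurRoot K t h β₁ → isRealSchurRoot K t h β₂ →
      x = natZ β₁ → y = natZ β₂ → extMin K t h β₁ β₂ = 0) ∧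
    (∀ (β : V → ℕ) (i : V), isRealSchurRoot K t h β →
      x = natZ β → y = (fun j => -(gammaRoot t h i j : ℤ)) → β i = 0))

/-- The domain of semi-invariants `D(β) ⊆ ℚ^{Q_0}`. -/
def Dom (t h : A → V) (β : V → ℕ) : Set (V → ℚ) :=
  {x | eulerForm t h x (natQ β) = 0 ∧
    ∀ β' : V → ℕ, Embeds K t h β' β → eulerForm t h x (natQ β') ≤ 0}

/-- A quiver exceptional set: a subset of `Ψ(Q)_{≥ -1}` of the form
`{β_1,…,β_l, −γ_{i_{l+1}},…,−γ_{i_m}}` with `β_j(i_k) = 0` and whose real-Schur-root part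
can be ordered into a quiver exceptional sequence. -/
def IsQExcSet (t h : A → V) (E : Finset (V → ℤ)) : Prop :=
  ∃ (l m : ℕ) (b : Fin l → V → ℕ) (g : Fin m → V),
    Function.Injective b ∧ Function.Injective g ∧ IsQES K t h b ∧
    (∀ j k, b j (g k) = 0) ∧
    (E : Set (V → ℤ)) =
      (Set.range fun j => natZ (b j)) ∪
      (Set.range fun k => (fun v => -(gammaRoot t h (g k) v : ℤ)))


/-- The underlying graph of the quiver is connected. -/
def IsConnectedQuiver (t h : A → V) : Prop :=
  ∀ i j : V,
    Relation.ReflTransGen (fun u v => ∃ a, (t a = u ∧ h a = v) ∨ (t a = v ∧ h a = u)) i j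

/-- Morphisms of representations. -/
structure RepHom {K : Type} [Field K] {V A : Type} {t h : A → V}
    (X Y : QuivRep K V A t h) : Type where
  app : ∀ i, X.sp i →ₗ[K] Y.sp i
  comm : ∀ a : A, (app (h a)).comp (X.map a) = (Y.map a).comp (app (t a))

namespace RepHom

variable {K₀ : Type} [Field K₀] {t h : A → V}

/-- The identity morphism. -/
def idHom (X : QuivRep K₀ V A t h) : RepHom X X :=
  ⟨fun _ => LinearMap.id, fun a => by ext x; simp⟩

/-- Composition of morphisms. -/
def comp {X Y Z : QuivRep K₀ V A t h} (f : RepHom X Y) (g : RepHom Y Z) : RepHom X Z :=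
  ⟨fun i => (g.app i).comp (f.app i), fun a => by
    ext x
    have hf := LinearMap.congr_fun (f.comm a) x
    have hg := LinearMap.congr_fun (g.comm a) (f.app (t a) x)
    simp only [LinearMap.comp_apply] at hf hg ⊢
    rw [hf, hg]⟩

/-- Sum of morphisms. -/
def add {X Y : QuivRep K₀ V A t h} (f g : RepHom X Y) : RepHom X Y :=
  ⟨fun i => f.app i + g.app i, fun a => by
    simp only [LinearMap.add_comp, LinearMap.comp_add, f.comm a, g.comm a]⟩

/-- Scalar multiple of a morphism. -/
def smul {X Y : QuivRep K₀ V A t h} (c : K₀) (f : RepHom X Y) : RepHom X Y :=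
  ⟨fun i => c • f.app i, fun a => by
    simp only [LinearMap.smul_comp, LinearMap.comp_smul, f.comm a]⟩

end RepHom

/-- The number of arrows `i → j` in the Ext-quiver `Q(𝓔)` of a sequence of dimension
vectors: `−⟨β_i, β_j⟩` for `i ≠ j`. -/
def extMult (t h : A → V) {l : ℕ} (b : Fin l → V → ℕ) (i j : Fin l) : ℕ :=
  if i = j then 0 else (-(eulerForm t h (natZ (b i)) (natZ (b j)))).toNat

/-- The arrow set of the Ext-quiver `Q(𝓔)`. -/
abbrev ExtArrow (t h : A → V) {l : ℕ} (b : Fin l → V → ℕ) : Type :=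
  (i : Fin l) × (j : Fin l) × Fin (extMult t h b i j)

/-- The representation space `rep(Q,β)` as a product of matrix spaces. -/
abbrev RepSpace (t h : A → V) (β : V → ℕ) : Type :=
  ∀ a : A, Matrix (Fin (β (h a))) (Fin (β (t a))) K

/-- The (base-change) action of `GL(β)` on `rep(Q,β)`. -/
def glAct (t h : A → V) {β : V → ℕ}
    (g : ∀ i, Matrix.GeneralLinearGroup (Fin (β i)) K) (W : RepSpace K t h β) :
    RepSpace K t h β :=
  fun a => (g (h a) : Matrix (Fin (β (h a))) (Fin (β (h a))) K) * W a *
    (((g (t a))⁻¹ : Matrix.GeneralLinearGroup (Fin (β (t a))) K) :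
      Matrix (Fin (β (t a))) (Fin (β (t a))) K)

/-- A polynomial function on `rep(Q,β)`. -/
def IsPolyFun (t h : A → V) {β : V → ℕ} (f : RepSpace K t h β → K) : Prop :=
  ∃ P : MvPolynomial ((a : A) × (Fin (β (h a)) × Fin (β (t a)))) K,
    ∀ W, f W = MvPolynomial.eval (fun x => W x.1 x.2.1 x.2.2) P

/-- The weight space `SI(Q,β)_σ` of semi-invariant polynomial functions of weight `σ`. -/
def SIweight (t h : A → V) (β : V → ℕ) (σ : V → ℤ) :
    Submodule K (RepSpace K t h β → K) where
  carrier := {f | IsPolyFun K t h f ∧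
    ∀ (g : ∀ i, Matrix.GeneralLinearGroup (Fin (β i)) K) (W : RepSpace K t h β),
      f (glAct K t h g W) =
        (((∏ i, (Matrix.GeneralLinearGroup.det (g i)) ^ σ i : Kˣ) : K)) * f W}
  zero_mem' := by
    refine ⟨⟨0, by simp⟩, by simp⟩
  add_mem' := by
    rintro f g ⟨⟨P, hP⟩, hf⟩ ⟨⟨Q, hQ⟩, hg⟩
    refine ⟨⟨P + Q, fun W => ?_⟩, fun gg W => ?_⟩
    · simp [hP W, hQ W]
    · simp only [Pi.add_apply, hf gg W, hg gg W]; ring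
  smul_mem' := by
    rintro c f ⟨⟨P, hP⟩, hf⟩
    refine ⟨⟨MvPolynomial.C c * P, fun W => ?_⟩, fun gg W => ?_⟩
    · simp [hP W]
    · simp only [Pi.smul_apply, hf gg W, smul_eq_mul]; ring

/-- Entry of a matrix accessed through natural-number indices. -/
def entryN {m n : ℕ} (M : Matrix (Fin m) (Fin n) K) (r c : ℕ) : K :=
  if hr : r < m then (if hc : c < n then M ⟨r, hr⟩ ⟨c, hc⟩ else 0) else 0

/-- The matrix of the map `d^V_W` (with `V` of dimension vector `α` varying and `W` of
dimension vector `w` fixed), in the standard bases. -/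
def schofieldMatrix (t h : A → V) {α w : V → ℕ}
    (Vm : RepSpace K t h α) (W : RepSpace K t h w) :
    Matrix ((a : A) × (Fin (w (h a)) × Fin (α (t a)))) ((i : V) × (Fin (w i) × Fin (α i))) K :=
  fun r c =>
    (if c.1 = h r.1 ∧ (c.2.1 : ℕ) = (r.2.1 : ℕ) then
      entryN K (Vm r.1) (c.2.2 : ℕ) (r.2.2 : ℕ) else 0)
    - (if c.1 = t r.1 ∧ (c.2.2 : ℕ) = (r.2.2 : ℕ) then
      entryN K (W r.1) (r.2.1 : ℕ) (c.2.1 : ℕ) else 0)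

/-- The Schofield semi-invariant `c_W : rep(Q,α) → K`, `V ↦ det d^V_W` (defined when
`⟨α, dim W⟩ = 0`, i.e. when `d^V_W` is a square matrix). -/
def schofieldSI (t h : A → V) {α w : V → ℕ} (W : RepSpace K t h w)
    (Vm : RepSpace K t h α) : K :=
  if hc : Fintype.card ((i : V) × (Fin (w i) × Fin (α i))) =
      Fintype.card ((a : A) × (Fin (w (h a)) × Fin (α (t a)))) then
    ((schofieldMatrix K t h Vm W).submatrix (Fintype.equivOfCardEq hc) id).det
  else 0

/-- The representation of `Q` attached to a point of `rep(Q,β)`. -/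
def toRep (t h : A → V) {β : V → ℕ} (W : RepSpace K t h β) : QuivRep K V A t h where
  sp i := Fin (β i) → K
  map a := Matrix.mulVecLin (W a)

/-! Let `X` be rigid of dimension vector `α` and take `σ = ⟨α,·⟩`. If `Ext¹(X, P) = 0`, then every
nonzero morphism from `P` to a `σ`-stable representation `Y` is onto: its image `I` is a quotient
of `P`, so `Ext¹(X, I) = 0` and `σ(I) = dim Hom(X, I) ≥ 0`. For `P = X` this places all `σ`-stable
representations in the right perpendicular category of `X`. Universal extensions of projectives by
powers of `X` are projective relative to that category, and so are the kernels of their morphisms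
into it. If `P → Y` is a nonzero morphism from a relative projective of least possible dimension
and `Ext¹(Y, Z) ≠ 0`, then the kernel maps nontrivially to `Z`; hence `Z` is covered by a smaller
relative projective than `Y` is. Sorting the stable representations by the size of their covers
therefore kills `Ext¹` from left to right and on the diagonal, while `Hom` vanishes by Schur's
lemma. Finally, `End(Y)` is a division algebra whose dimension `d` divides the entries of
`β = dim Y`, so `d = ⟨β, β⟩` is a multiple of `d²` and `d = 1`. The weight `−⟨·,α⟩` reduces to the
case above by duality. -/

/-! ### Morphisms, extensions and the Euler form -/

section EulerForm

variable {V A : Type} [Fintype V] [DecidableEq V] [Fintype A]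

theorem sum_weightL_mul (t h : A → V) (α β : V → ℤ) :
    ∑ i, weightL t h α i * β i = eulerForm t h α β := by
  have arrows : ∑ i, (∑ a, if h a = i then α (t a) else 0) * β i = ∑ a, α (t a) * β (h a) := by
    simp only [Finset.sum_mul]
    rw [Finset.sum_comm]
    simp
  rw [eulerForm, ← arrows, ← Finset.sum_sub_distrib]
  simp [weightL, eulerForm, sub_mul]

theorem weightL_swap (t h : A → V) (α : V → ℤ) : weightL h t α = -weightR t h α := by
  ext i
  simp [weightL, weightR, eulerForm]

end EulerForm

namespace QuivRep

section HomExt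

variable {K : Type} [Field K] {V A : Type} {t h : A → V} {X Y Z : QuivRep K V A t h}

theorem dmap_apply (φ : ∀ i, X.sp i →ₗ[K] Y.sp i) (a : A) (x : X.sp (t a)) :
    dmap X Y φ a x = φ (h a) (X.map a x) - Y.map a (φ (t a) x) := rfl

theorem mem_homS_iff {φ : ∀ i, X.sp i →ₗ[K] Y.sp i} :
    φ ∈ homS X Y ↔ ∀ a x, φ (h a) (X.map a x) = Y.map a (φ (t a) x) :=
  forall_congr' fun _ => LinearMap.ext_iff

theorem homS.map_apply (f : homS X Y) (a : A) (x : X.sp (t a)) :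
    f.1 (h a) (X.map a x) = Y.map a (f.1 (t a) x) :=
  mem_homS_iff.1 f.2 a x

theorem ker_dmap : LinearMap.ker (dmap X Y) = homS X Y := by
  ext φ
  simp only [LinearMap.mem_ker, funext_iff, LinearMap.ext_iff, dmap_apply, mem_homS_iff,
    sub_eq_zero, Pi.zero_apply, LinearMap.zero_apply]

theorem comp_mem_homS (g : homS Y Z) (f : homS X Y) :
    (fun i => g.1 i ∘ₗ f.1 i) ∈ homS X Z :=
  mem_homS_iff.2 fun a x => by simp only [LinearMap.comp_apply, homS.map_apply]

theorem dmap_comp_left (g : homS Y Z) (φ : ∀ i, X.sp i →ₗ[K] Y.sp i) :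
    dmap X Z (fun i => g.1 i ∘ₗ φ i) = fun a => g.1 (h a) ∘ₗ dmap X Y φ a := by
  ext a x
  simp only [dmap_apply, LinearMap.comp_apply, map_sub, homS.map_apply]

theorem dmap_comp_right (f : homS X Y) (φ : ∀ i, Y.sp i →ₗ[K] Z.sp i) :
    dmap X Z (fun i => φ i ∘ₗ f.1 i) = fun a => dmap Y Z φ a ∘ₗ f.1 (t a) := by
  ext a x
  simp only [dmap_apply, LinearMap.comp_apply, homS.map_apply]

theorem exists_ne_zero_of_homS_ne_bot (hXY : homS X Y ≠ ⊥) : ∃ f : homS X Y, f ≠ 0 :=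
  haveI := Submodule.nontrivial_iff_ne_bot.2 hXY
  exists_ne 0

/-- The condition `Ext¹_Q(X, Y) = 0`, phrased without dimensions: `d^X_Y` is onto. -/
def ExtVanishes (X Y : QuivRep K V A t h) : Prop := Function.Surjective (dmap X Y)

theorem extDim_eq_zero_iff [Finite A] : extDim X Y = 0 ↔ ExtVanishes X Y := by
  rw [extDim, Module.finrank_zero_iff, Submodule.Quotient.subsingleton_iff,
    LinearMap.range_eq_top, ExtVanishes]

theorem homDim_eq_zero_iff [Finite V] : homDim X Y = 0 ↔ homS X Y = ⊥ :=
  Submodule.finrank_eq_zero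

/-- `Hom_Q(X, Y) = 0` and `Ext¹_Q(X, Y) = 0`, i.e. `Y` lies in the right perpendicular category
of `X`. -/
def Perp (X Y : QuivRep K V A t h) : Prop := homS X Y = ⊥ ∧ ExtVanishes X Y

theorem ExtVanishes.of_surjective_right (hXY : ExtVanishes X Y) (g : homS Y Z)
    (hg : ∀ i, Function.Surjective (g.1 i)) : ExtVanishes X Z := by
  intro ψ
  choose ψ' hψ' using fun a => Module.projective_lifting_property (g.1 (h a)) (ψ a) (hg (h a))
  obtain ⟨φ, rfl⟩ := hXY ψ'
  exact ⟨fun i => g.1 i ∘ₗ φ i, by rw [dmap_comp_left]; exact funext hψ'⟩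

theorem ExtVanishes.of_injective_left (hYZ : ExtVanishes Y Z) (f : homS X Y)
    (hf : ∀ i, Function.Injective (f.1 i)) : ExtVanishes X Z := by
  intro ψ
  choose r hr using fun i =>
    LinearMap.exists_leftInverse_of_injective (f.1 i) (LinearMap.ker_eq_bot.2 (hf i))
  obtain ⟨φ, hφ⟩ := hYZ fun a => ψ a ∘ₗ r (t a)
  refine ⟨fun i => φ i ∘ₗ f.1 i, ?_⟩
  rw [dmap_comp_right, hφ]
  exact funext fun a => by rw [LinearMap.comp_assoc, hr, LinearMap.comp_id]

end HomExt

section Ringel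

variable {K : Type} [Field K] {V A : Type} [Fintype V] [Fintype A] {t h : A → V}

theorem eulerForm_dimVec (X Y : QuivRep K V A t h) :
    eulerForm t h (natZ X.dimVec) (natZ Y.dimVec) = (homDim X Y : ℤ) - extDim X Y := by
  have rank_nullity := (dmap X Y).finrank_range_add_finrank_ker
  have coker := (LinearMap.range (dmap X Y)).finrank_quotient_add_finrank
  rw [ker_dmap, Module.finrank_pi_fintype] at rank_nullity
  rw [Module.finrank_pi_fintype] at coker
  simp only [Module.finrank_linearMap] at rank_nullity coker
  simp only [eulerForm, natZ, dimVec, homDim, extDim]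
  zify at rank_nullity coker
  linarith

theorem sum_weightL_dimVec [DecidableEq V] (X Y : QuivRep K V A t h) :
    ∑ i, weightL t h (natZ X.dimVec) i * (Y.dimVec i : ℤ) = (homDim X Y : ℤ) - extDim X Y :=
  (sum_weightL_mul t h _ (natZ Y.dimVec)).trans (eulerForm_dimVec X Y)

end Ringel

end QuivRep

/-! ### Subrepresentations, kernels and images -/

namespace QuivRep

section Subrepresentations

variable {K : Type} [Field K] {V A : Type} {t h : A → V} {X Y Z : QuivRep K V A t h}

/-- A subrepresentation, regarded as a representation in its own right. -/
def Sub.toRep (U : Sub X) : QuivRep K V A t h where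
  sp i := U.sub i
  map a := (X.map a).restrict (U.le a)

theorem Sub.dimVec_toRep (U : Sub X) : U.toRep.dimVec = U.dimVec := rfl

/-- The inclusion morphism of a subrepresentation. -/
def Sub.incl (U : Sub X) : homS U.toRep X :=
  ⟨fun i => (U.sub i).subtype, fun _ => rfl⟩

theorem Sub.incl_injective (U : Sub X) (i : V) : Function.Injective (U.incl.1 i) :=
  Subtype.val_injective

theorem Sub.dimVec_eq_zero_iff {U : Sub X} : (U.dimVec = fun _ => 0) ↔ ∀ i, U.sub i = ⊥ :=
  funext_iff.trans <| forall_congr' fun _ => Submodule.finrank_eq_zero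

theorem Sub.dimVec_eq_iff {U : Sub X} : U.dimVec = X.dimVec ↔ ∀ i, U.sub i = ⊤ :=
  funext_iff.trans <| forall_congr' fun _ =>
    ⟨Submodule.eq_top_of_finrank_eq, fun hU => (LinearEquiv.ofTop _ hU).finrank_eq⟩

/-- The kernel of a morphism of representations. -/
def ker (f : homS X Y) : Sub X where
  sub i := LinearMap.ker (f.1 i)
  le a x hx := by
    rw [LinearMap.mem_ker] at hx ⊢
    rw [homS.map_apply, hx, map_zero]

/-- The image of a morphism of representations. -/
def range (f : homS X Y) : Sub Y where
  sub i := LinearMap.range (f.1 i)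
  le a := by
    rintro _ ⟨x, rfl⟩
    exact ⟨X.map a x, homS.map_apply f a x⟩

/-- A morphism with its target restricted to its image. -/
def rangeRestrict (f : homS X Y) : homS X (range f).toRep :=
  ⟨fun i => (f.1 i).rangeRestrict, mem_homS_iff.2 fun a x => Subtype.ext (homS.map_apply f a x)⟩

theorem dimVec_range_add_ker (f : homS X Y) (i : V) :
    (range f).dimVec i + (ker f).dimVec i = X.dimVec i :=
  (f.1 i).finrank_range_add_finrank_ker

theorem dimVec_range_eq_zero_iff {f : homS X Y} : ((range f).dimVec = fun _ => 0) ↔ f = 0 := by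
  rw [Sub.dimVec_eq_zero_iff, Subtype.ext_iff, funext_iff]
  exact forall_congr' fun i => LinearMap.range_eq_bot

theorem dimVec_range_eq_iff {f : homS X Y} :
    (range f).dimVec = Y.dimVec ↔ ∀ i, Function.Surjective (f.1 i) := by
  simp only [Sub.dimVec_eq_iff, range, LinearMap.range_eq_top]

theorem dimVec_ker_eq_zero_iff {f : homS X Y} :
    ((ker f).dimVec = fun _ => 0) ↔ ∀ i, Function.Injective (f.1 i) := by
  simp only [Sub.dimVec_eq_zero_iff, ker, LinearMap.ker_eq_bot]

theorem ExtVanishes.toRep_left (hYZ : ExtVanishes Y Z) (U : Sub Y) : ExtVanishes U.toRep Z :=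
  hYZ.of_injective_left U.incl U.incl_injective

theorem ExtVanishes.range_right (hXY : ExtVanishes X Y) (f : homS Y Z) :
    ExtVanishes X (range f).toRep :=
  hXY.of_surjective_right (rangeRestrict f) fun i => (f.1 i).surjective_rangeRestrict

theorem ExtVanishes.ker_right (hXY : ExtVanishes X Y) (hXZ : homS X Z = ⊥) (f : homS Y Z) :
    ExtVanishes X (ker f).toRep := by
  intro ψ
  obtain ⟨φ, hφ⟩ := hXY fun a => (ker f).incl.1 (h a) ∘ₗ ψ a
  have comp_mem : (fun i => f.1 i ∘ₗ φ i) ∈ homS X Z := by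
    rw [← ker_dmap, LinearMap.mem_ker, dmap_comp_left, hφ]
    ext a x
    exact (ψ a x).2
  rw [hXZ, Submodule.mem_bot] at comp_mem
  have mem_ker (i : V) (x : X.sp i) : φ i x ∈ (ker f).sub i :=
    LinearMap.congr_fun (congr_fun comp_mem i) x
  refine ⟨fun i => (φ i).codRestrict _ (mem_ker i), ?_⟩
  ext a x
  exact Subtype.ext (LinearMap.congr_fun (congr_fun hφ a) x)

theorem ExtVanishes.of_surjective_left (hXZ : ExtVanishes X Z) (f : homS X Y)
    (hf : ∀ i, Function.Surjective (f.1 i)) (hker : homS (ker f).toRep Z = ⊥) :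
    ExtVanishes Y Z := by
  intro ψ
  obtain ⟨φ, hφ⟩ := hXZ fun a => ψ a ∘ₗ f.1 (t a)
  have restrict_mem : (fun i => φ i ∘ₗ (ker f).incl.1 i) ∈ homS (ker f).toRep Z := by
    rw [← ker_dmap, LinearMap.mem_ker, dmap_comp_right, hφ]
    ext a ⟨x, hx⟩
    exact (congr_arg (ψ a) hx).trans (map_zero _)
  rw [hker, Submodule.mem_bot] at restrict_mem
  have ker_le (i : V) : LinearMap.ker (f.1 i) ≤ LinearMap.ker (φ i) := fun x hx =>
    LinearMap.congr_fun (congr_fun restrict_mem i) ⟨x, hx⟩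
  choose s hs using fun i =>
    (f.1 i).exists_rightInverse_of_surjective (LinearMap.range_eq_top.2 (hf i))
  have factors (i : V) : (φ i ∘ₗ s i) ∘ₗ f.1 i = φ i := by
    ext x
    refine sub_eq_zero.1 ((map_sub (φ i) _ _).symm.trans (ker_le i ?_))
    rw [LinearMap.mem_ker, map_sub, sub_eq_zero]
    exact LinearMap.congr_fun (hs i) (f.1 i x)
  refine ⟨fun i => φ i ∘ₗ s i, funext fun a => ?_⟩
  have agree : dmap Y Z (fun i => φ i ∘ₗ s i) a ∘ₗ f.1 (t a) = ψ a ∘ₗ f.1 (t a) := by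
    rw [← congr_fun hφ a, ← congr_fun (dmap_comp_right f _) a]
    simp only [factors]
  exact (LinearMap.cancel_right (hf (t a))).1 agree

end Subrepresentations

end QuivRep

/-! ### Stable representations -/

section Stable

open QuivRep

variable {K : Type} [Field K] {V A : Type} [Fintype V] {t h : A → V} {σ : V → ℤ}
  {X Y : QuivRep K V A t h}

theorem IsStable.isSemistable (hX : IsStable K σ X) : IsSemistable K σ X := by
  refine ⟨hX.1, fun U => ?_⟩
  by_cases hU₀ : U.dimVec = fun _ => 0
  · simp [hU₀]
  by_cases hU₁ : U.dimVec = X.dimVec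
  · rw [hU₁, hX.1]
  · exact (hX.2.2 U hU₀ hU₁).le

theorem IsStable.dimVec_eq_of_nonneg (hX : IsStable K σ X) {U : QuivRep.Sub X}
    (hU₀ : U.dimVec ≠ fun _ => 0) (hU : 0 ≤ ∑ i, σ i * (U.dimVec i : ℤ)) :
    U.dimVec = X.dimVec :=
  by_contra fun hne => (hX.2.2 U hU₀ hne).not_ge hU

theorem IsStable.bijective_of_ne_zero (hX : IsStable K σ X) (hY : IsStable K σ Y)
    {f : homS X Y} (hf : f ≠ 0) (i : V) : Function.Bijective (f.1 i) := by
  have weights : ∑ i, σ i * ((range f).dimVec i : ℤ) +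
      ∑ i, σ i * ((ker f).dimVec i : ℤ) = 0 := by
    rw [← Finset.sum_add_distrib, ← hX.1]
    refine Finset.sum_congr rfl fun i _ => ?_
    rw [← dimVec_range_add_ker f i]
    push_cast
    ring
  have range_ne : (range f).dimVec ≠ fun _ => 0 :=
    fun h₀ => hf (dimVec_range_eq_zero_iff.1 h₀)
  have range_eq : (range f).dimVec = Y.dimVec :=
    hY.dimVec_eq_of_nonneg range_ne (by linarith [hX.isSemistable.2 (ker f)])
  have ker_eq : (ker f).dimVec = fun _ => 0 := by
    by_contra ker_ne
    have ker_top : (ker f).dimVec = X.dimVec :=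
      hX.dimVec_eq_of_nonneg ker_ne (by linarith [hY.isSemistable.2 (range f)])
    refine range_ne (funext fun i => ?_)
    have := dimVec_range_add_ker f i
    rw [ker_top] at this
    omega
  exact ⟨dimVec_ker_eq_zero_iff.1 ker_eq i, dimVec_range_eq_iff.1 range_eq i⟩

theorem IsStable.homS_eq_bot (hX : IsStable K σ X) (hY : IsStable K σ Y)
    (hXY : ¬ RepIso K X Y) : homS X Y = ⊥ := by
  by_contra hne
  obtain ⟨f, hf⟩ := exists_ne_zero_of_homS_ne_bot hne
  exact hXY ⟨fun i => LinearEquiv.ofBijective (f.1 i) (hX.bijective_of_ne_zero hY hf i),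
    homS.map_apply f⟩

variable [DecidableEq V] [Fintype A]

theorem IsStable.surjective_of_extVanishes
    (hY : IsStable K (weightL t h (natZ X.dimVec)) Y) {P : QuivRep K V A t h}
    (hXP : ExtVanishes X P) {f : homS P Y} (hf : f ≠ 0) (i : V) :
    Function.Surjective (f.1 i) := by
  have weight := sum_weightL_dimVec X (range f).toRep
  rw [extDim_eq_zero_iff.2 (hXP.range_right f), Sub.dimVec_toRep] at weight
  exact dimVec_range_eq_iff.1 (hY.dimVec_eq_of_nonneg
    (fun h₀ => hf (dimVec_range_eq_zero_iff.1 h₀)) (by omega)) i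

theorem IsStable.perp (hX : X.IsRigid)
    (hY : IsStable K (weightL t h (natZ X.dimVec)) Y) : Perp X Y := by
  have weight : (homDim X Y : ℤ) - extDim X Y = 0 :=
    (sum_weightL_dimVec X Y).symm.trans hY.1
  have hXX : ExtVanishes X X := extDim_eq_zero_iff.1 hX
  have hom_eq : homS X Y = ⊥ := by
    by_contra hne
    obtain ⟨f, hf⟩ := exists_ne_zero_of_homS_ne_bot hne
    have ext_eq := extDim_eq_zero_iff.2
      (hXX.of_surjective_right f (hY.surjective_of_extVanishes hXX hf))
    exact hne (homDim_eq_zero_iff.1 (by omega))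
  refine ⟨hom_eq, extDim_eq_zero_iff.1 ?_⟩
  have := homDim_eq_zero_iff.2 hom_eq
  omega

end Stable

/-! ### Universal extensions and relative projectives -/

namespace QuivRep

section Extension

variable {K : Type} [Field K] {V A : Type} {t h : A → V} {P W X Y Z : QuivRep K V A t h}

/-- The extension `0 → P → extension P W η → W → 0` with cocycle `η`: the arrows act by the block
upper triangular maps with diagonal `P`, `W` and upper right corner `η`. -/
@[reducible]
def extension (P W : QuivRep K V A t h) (η : ∀ a, W.sp (t a) →ₗ[K] P.sp (h a)) :
    QuivRep K V A t h where
  sp i := P.sp i × W.sp i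
  map a := ((P.map a).coprod (η a)).prod (W.map a ∘ₗ LinearMap.snd K _ _)

theorem exists_dmap_extension_eq {η : ∀ a, W.sp (t a) →ₗ[K] P.sp (h a)} (hWZ : ExtVanishes W Z)
    {ψ : ∀ a, (extension P W η).sp (t a) →ₗ[K] Z.sp (h a)} {φ : ∀ i, P.sp i →ₗ[K] Z.sp i}
    (hφ : dmap P Z φ = fun a => ψ a ∘ₗ LinearMap.inl K _ _) :
    ∃ φ', (∀ i, φ' i ∘ₗ LinearMap.inl K _ _ = φ i) ∧ dmap (extension P W η) Z φ' = ψ := by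
  obtain ⟨θ, hθ⟩ := hWZ fun a => ψ a ∘ₗ LinearMap.inr K _ _ - φ (h a) ∘ₗ η a
  refine ⟨fun i => (φ i).coprod (θ i), fun i => LinearMap.coprod_inl _ _, ?_⟩
  refine funext fun a => LinearMap.prod_ext (LinearMap.ext fun p => ?_) (LinearMap.ext fun x => ?_)
  · rw [LinearMap.comp_apply, LinearMap.comp_apply]
    refine (dmap_apply (X := extension P W η) _ a (p, 0)).trans ?_
    simpa [dmap_apply] using LinearMap.congr_fun (congr_fun hφ a) p
  · rw [LinearMap.comp_apply, LinearMap.comp_apply]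
    refine (dmap_apply (X := extension P W η) _ a (0, x)).trans ?_
    simpa [dmap_apply, add_sub_assoc, ← eq_sub_iff_add_eq'] using
      LinearMap.congr_fun (congr_fun hθ a) x

theorem ExtVanishes.extension_left {η : ∀ a, W.sp (t a) →ₗ[K] P.sp (h a)}
    (hPZ : ExtVanishes P Z) (hWZ : ExtVanishes W Z) : ExtVanishes (extension P W η) Z := fun ψ =>
  have ⟨_, hφ⟩ := hPZ fun a => ψ a ∘ₗ LinearMap.inl K _ _
  have ⟨φ', _, hφ'⟩ := exists_dmap_extension_eq hWZ hφ
  ⟨φ', hφ'⟩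

theorem homS_extension_ne_bot {η : ∀ a, W.sp (t a) →ₗ[K] P.sp (h a)} (hWZ : ExtVanishes W Z)
    (hPZ : homS P Z ≠ ⊥) : homS (extension P W η) Z ≠ ⊥ := by
  obtain ⟨f, hf⟩ := exists_ne_zero_of_homS_ne_bot hPZ
  have hf₀ : dmap P Z f.1 = 0 := LinearMap.mem_ker.1 (ker_dmap.ge f.2)
  obtain ⟨φ, hφ, hφ₀⟩ := exists_dmap_extension_eq (η := η) (ψ := 0) hWZ hf₀
  rw [← LinearMap.mem_ker, ker_dmap] at hφ₀
  refine Submodule.ne_bot_iff _ |>.2 ⟨φ, hφ₀, ?_⟩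
  rintro rfl
  exact hf (Subtype.ext (funext fun i => (hφ i).symm))

theorem ExtVanishes.extension_right {η : ∀ a, W.sp (t a) →ₗ[K] P.sp (h a)}
    (hXW : ExtVanishes X W)
    (hη : ∀ ρ : ∀ a, X.sp (t a) →ₗ[K] P.sp (h a), ∃ f : homS X W, ∀ a, η a ∘ₗ f.1 (t a) = ρ a) :
    ExtVanishes X (extension P W η) := by
  intro ψ
  obtain ⟨φ, hφ⟩ := hXW fun a => LinearMap.snd K _ _ ∘ₗ ψ a
  obtain ⟨f, hf⟩ := hη fun a => -(LinearMap.fst K _ _ ∘ₗ ψ a) - η a ∘ₗ φ (t a)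
  refine ⟨fun i => LinearMap.prod 0 (φ i + f.1 i), ?_⟩
  refine funext fun a => LinearMap.ext fun x => (dmap_apply _ a x).trans (Prod.ext ?_ ?_)
  · have hfx := LinearMap.congr_fun (hf a) x
    simp only [LinearMap.comp_apply, LinearMap.sub_apply, LinearMap.neg_apply] at hfx
    simp [hfx]
  · simpa [dmap_apply, homS.map_apply] using LinearMap.congr_fun (congr_fun hφ a) x

/-- The direct sum of `n` copies of `X`. -/
@[reducible]
def power (X : QuivRep K V A t h) (n : ℕ) : QuivRep K V A t h where
  sp i := Fin n → X.sp i
  map a := LinearMap.pi fun k => X.map a ∘ₗ LinearMap.proj k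

theorem ExtVanishes.power_right (hXY : ExtVanishes X Y) (n : ℕ) : ExtVanishes X (power Y n) := by
  intro ψ
  choose φ hφ using fun k => hXY fun a => LinearMap.proj k ∘ₗ ψ a
  refine ⟨fun i => LinearMap.pi fun k => φ k i, ?_⟩
  ext a x k
  exact LinearMap.congr_fun (congr_fun (hφ k) a) x

theorem ExtVanishes.power_left (hXY : ExtVanishes X Y) (n : ℕ) : ExtVanishes (power X n) Y := by
  intro ψ
  choose φ hφ using fun k => hXY fun a => ψ a ∘ₗ LinearMap.single K (fun _ => X.sp (t a)) k
  refine ⟨fun i => LinearMap.lsum K _ K fun k => φ k i, ?_⟩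
  refine funext fun a => LinearMap.pi_ext' fun k => LinearMap.ext fun x => ?_
  rw [LinearMap.comp_apply, LinearMap.comp_apply]
  refine (dmap_apply (X := power X n) _ a (Pi.single k x)).trans ?_
  simpa [dmap_apply, Pi.single_apply, apply_ite] using LinearMap.congr_fun (congr_fun (hφ k) a) x

/-- The cocycle of the universal extension of a power of `X` by `P`: its components run through
a basis of all cocycles, not only through representatives of a basis of `Ext¹_Q(X, P)`. -/
def universalCocycle [Finite A] (X P : QuivRep K V A t h) (a : A) :
    (power X (Module.finrank K (∀ a, X.sp (t a) →ₗ[K] P.sp (h a)))).sp (t a) →ₗ[K] P.sp (h a) :=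
  LinearMap.lsum K _ K fun k => Module.finBasis K (∀ a, X.sp (t a) →ₗ[K] P.sp (h a)) k a

theorem ExtVanishes.universalExtension_right [Finite A] (hX : ExtVanishes X X)
    (P : QuivRep K V A t h) : ExtVanishes X (extension P (power X _) (universalCocycle X P)) := by
  refine (hX.power_right _).extension_right fun ρ => ?_
  set c := (Module.finBasis K (∀ a, X.sp (t a) →ₗ[K] P.sp (h a))).repr ρ
  refine ⟨⟨fun i => LinearMap.pi fun k => c k • LinearMap.id, ?_⟩, fun a => ?_⟩
  · refine mem_homS_iff.2 fun a x => ?_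
    ext k
    simp
  · rw [← congr_fun ((Module.finBasis K _).sum_repr ρ) a]
    ext x
    simp [universalCocycle, c]

end Extension

section RelProjective

variable {K : Type} [Field K] {V A : Type} {t h : A → V} {P X Y Z : QuivRep K V A t h}

/-- `P` behaves like a projective object relative to the right perpendicular category of `X`:
`Ext¹_Q(P, Z) = 0` for all `Z` in that category, and `Ext¹_Q(X, P) = 0`. The representation `P`
itself need not lie in the perpendicular category. -/
def IsRelProjective (X P : QuivRep K V A t h) : Prop :=
  ExtVanishes X P ∧ ∀ Z, Perp X Z → ExtVanishes P Z

theorem IsRelProjective.ker (hP : IsRelProjective X P) (hXY : Perp X Y) (f : homS P Y) :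
    IsRelProjective X (ker f).toRep :=
  ⟨hP.1.ker_right hXY.1 f, fun Z hXZ => (hP.2 Z hXZ).toRep_left _⟩

theorem IsRelProjective.homS_ker_ne_bot (hP : IsRelProjective X P) (hXZ : Perp X Z)
    {f : homS P Y} (hf : ∀ i, Function.Surjective (f.1 i)) (hYZ : ¬ ExtVanishes Y Z) :
    homS (QuivRep.ker f).toRep Z ≠ ⊥ :=
  fun h₀ => hYZ ((hP.2 Z hXZ).of_surjective_left f hf h₀)

theorem exists_isRelProjective [Finite A] (hX : ExtVanishes X X)
    (hP : ∀ Z, ExtVanishes P Z) (hXY : ExtVanishes X Y)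
    (hPY : homS P Y ≠ ⊥) : ∃ R, IsRelProjective X R ∧ homS R Y ≠ ⊥ :=
  ⟨extension P (power X _) (universalCocycle X P),
    ⟨hX.universalExtension_right P, fun Z hXZ => (hP Z).extension_left (hXZ.2.power_left _)⟩,
    homS_extension_ne_bot (hXY.power_left _) hPY⟩

end RelProjective

end QuivRep

/-! ### Projective representations -/

section Paths

variable {V A : Type} {t h : A → V}

theorem isPathFrom_append {p q : List A} {i j : V} :
    IsPathFrom t h i (p ++ q) j ↔ ∃ k, IsPathFrom t h i p k ∧ IsPathFrom t h k q j := by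
  induction p generalizing i with
  | nil => simp [IsPathFrom]
  | cons a p ih => simp [IsPathFrom, ih, and_assoc]

theorem IsPathFrom.reverse {p : List A} {i j : V} (hp : IsPathFrom t h i p j) :
    IsPathFrom h t j p.reverse i := by
  induction p generalizing i with
  | nil => exact hp.symm
  | cons a p ih =>
    rw [List.reverse_cons, isPathFrom_append]
    exact ⟨h a, ih hp.2, rfl, hp.1⟩

theorem Acyclic.op (hQ : Acyclic t h) : Acyclic h t := fun i p hp =>
  List.reverse_eq_nil_iff.1 (hQ i p.reverse hp.reverse)

theorem Acyclic.nodup (hQ : Acyclic t h) {p : List A} {i j : V} (hp : IsPathFrom t h i p j) :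
    p.Nodup := by
  induction p generalizing i with
  | nil => exact List.nodup_nil
  | cons a p ih =>
    refine List.nodup_cons.2 ⟨fun ha => ?_, ih hp.2⟩
    obtain ⟨q, r, rfl⟩ := List.append_of_mem ha
    obtain ⟨k, hq, hk, -⟩ := isPathFrom_append.1 hp.2
    exact List.cons_ne_nil a q (hQ (t a) (a :: q) ⟨rfl, hk ▸ hq⟩)

theorem Acyclic.finite_paths [Finite A] (hQ : Acyclic t h) (i j : V) :
    Finite {p : List A // IsPathFrom t h i p j} := by
  classical
  have := Fintype.ofFinite A
  exact Finite.of_injective (β := {p : List A // p.Nodup}) (Subtype.map id fun p => hQ.nodup)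
    (Subtype.map_injective _ Function.injective_id)

end Paths

namespace QuivRep

section Projective

variable {K : Type} [Field K] {V A : Type} {t h : A → V}

/-- The indecomposable projective representation at `v`: its space at `j` has as basis the paths
from `v` to `j`. They are encoded as paths from `j` to `v` in the opposite quiver, so that composing
with an arrow is `List.cons`. -/
@[reducible]
def projective (K : Type) [Field K] [Finite A] (hQ : Acyclic t h) (v : V) : QuivRep K V A t h where
  sp j := {p : List A // IsPathFrom h t j p v} →₀ K
  inst3 j := haveI := hQ.op.finite_paths j v; inferInstance
  map a := Finsupp.lmapDomain K K fun p => ⟨a :: p.1, rfl, p.2⟩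

/-- The value at each path of the solution `φ` of `d(φ) = ψ` on `projective v` with value `y` at the
empty path. -/
def pathEval {v : V} (Y : QuivRep K V A t h) (y : Y.sp v)
    (ψ : ∀ a, ({p : List A // IsPathFrom h t (t a) p v} →₀ K) →ₗ[K] Y.sp (h a)) :
    ∀ (p : List A) (j : V), IsPathFrom h t j p v → Y.sp j
  | [], _, hp => Eq.symm hp ▸ y
  | a :: p, _, hp =>
    hp.1 ▸ (Y.map a (pathEval Y y ψ p (t a) hp.2) + ψ a (Finsupp.single ⟨p, hp.2⟩ 1))

variable [Finite A]

theorem exists_dmap_projective_eq (hQ : Acyclic t h) {v : V} (Y : QuivRep K V A t h) (y : Y.sp v)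
    (ψ : ∀ a, (projective K hQ v).sp (t a) →ₗ[K] Y.sp (h a)) :
    ∃ φ : ∀ j, (projective K hQ v).sp j →ₗ[K] Y.sp j,
      φ v (Finsupp.single ⟨[], rfl⟩ 1) = y ∧ dmap (projective K hQ v) Y φ = ψ := by
  refine ⟨fun j => Finsupp.linearCombination K fun p => pathEval Y y ψ p.1 j p.2,
    by simp [pathEval], funext fun a => ?_⟩
  refine Finsupp.lhom_ext' fun p => LinearMap.ext_ring ?_
  rw [LinearMap.comp_apply, LinearMap.comp_apply]
  refine (dmap_apply (X := projective K hQ v) _ a _).trans ?_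
  simp [pathEval]

theorem extVanishes_projective (hQ : Acyclic t h) (v : V) (Y : QuivRep K V A t h) :
    ExtVanishes (projective K hQ v) Y := fun ψ =>
  have ⟨φ, _, hφ⟩ := exists_dmap_projective_eq hQ Y (0 : Y.sp v) ψ
  ⟨φ, hφ⟩

theorem homS_projective_ne_bot (hQ : Acyclic t h) {v : V} {Y : QuivRep K V A t h}
    (hY : Y.dimVec v ≠ 0) : homS (projective K hQ v) Y ≠ ⊥ := by
  have := Module.nontrivial_of_finrank_pos (Nat.pos_of_ne_zero hY)
  obtain ⟨y, hy⟩ := exists_ne (0 : Y.sp v)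
  obtain ⟨φ, hφ, hφ₀⟩ := exists_dmap_projective_eq hQ Y y 0
  rw [← LinearMap.mem_ker, ker_dmap] at hφ₀
  refine (Submodule.ne_bot_iff _).2 ⟨φ, hφ₀, ?_⟩
  rintro rfl
  exact hy hφ.symm

end Projective

section Height

variable {K : Type} [Field K] {V A : Type} [Fintype V] {t h : A → V} {P X Y Z : QuivRep K V A t h}

/-- The total dimension of a representation. -/
def totalDim (X : QuivRep K V A t h) : ℕ := ∑ i, X.dimVec i

theorem totalDim_ker_lt {f : homS P Y} (hf : f ≠ 0) : (ker f).toRep.totalDim < P.totalDim := by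
  obtain ⟨i, hi⟩ := Function.ne_iff.1 (mt dimVec_range_eq_zero_iff.1 hf)
  refine Finset.sum_lt_sum (fun j _ => ?_) ⟨i, Finset.mem_univ i, ?_⟩
  · exact (Nat.le_add_left _ _).trans_eq (dimVec_range_add_ker f j)
  · exact (lt_add_of_pos_left _ (Nat.pos_of_ne_zero hi)).trans_eq (dimVec_range_add_ker f i)

/-- The least total dimension of a relative projective mapping nontrivially to `Y`, and `0` if there
is none. The `⟨dim X,·⟩`-stable representations are ordered by it. -/
def height (X Y : QuivRep K V A t h) : ℕ :=
  sInf {n | ∃ P, IsRelProjective X P ∧ homS P Y ≠ ⊥ ∧ P.totalDim = n}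

theorem height_le (hP : IsRelProjective X P) (hPY : homS P Y ≠ ⊥) : height X Y ≤ P.totalDim :=
  Nat.sInf_le ⟨P, hP, hPY, rfl⟩

theorem exists_totalDim_eq_height (hP : IsRelProjective X P) (hPY : homS P Y ≠ ⊥) :
    ∃ R, IsRelProjective X R ∧ homS R Y ≠ ⊥ ∧ R.totalDim = height X Y :=
  Nat.sInf_mem (s := {n | ∃ R, IsRelProjective X R ∧ homS R Y ≠ ⊥ ∧ R.totalDim = n})
    ⟨_, P, hP, hPY, rfl⟩

end Height

end QuivRep

section HeightStable

open QuivRep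

variable {K : Type} [Field K] {V A : Type} [Fintype V] [DecidableEq V] [Fintype A] {t h : A → V}
  {X Y Z : QuivRep K V A t h}

theorem IsStable.exists_isRelProjective (hQ : Acyclic t h) (hX : X.IsRigid)
    (hY : IsStable K (weightL t h (natZ X.dimVec)) Y) :
    ∃ P, IsRelProjective X P ∧ homS P Y ≠ ⊥ := by
  obtain ⟨v, hv⟩ := Function.ne_iff.1 hY.2.1
  exact QuivRep.exists_isRelProjective (extDim_eq_zero_iff.1 hX) (extVanishes_projective hQ v)
    (hY.perp hX).2 (homS_projective_ne_bot hQ hv)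

theorem IsStable.height_lt (hQ : Acyclic t h) (hX : X.IsRigid)
    (hY : IsStable K (weightL t h (natZ X.dimVec)) Y)
    (hZ : IsStable K (weightL t h (natZ X.dimVec)) Z) (hYZ : ¬ ExtVanishes Y Z) :
    height X Z < height X Y := by
  obtain ⟨R, hR, hRY⟩ := hY.exists_isRelProjective hQ hX
  obtain ⟨P, hP, hPY, hdim⟩ := exists_totalDim_eq_height hR hRY
  obtain ⟨f, hf⟩ := exists_ne_zero_of_homS_ne_bot hPY
  have hker : homS (ker f).toRep Z ≠ ⊥ :=
    hP.homS_ker_ne_bot (hZ.perp hX) (hY.surjective_of_extVanishes hP.1 hf) hYZ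
  calc height X Z ≤ (ker f).toRep.totalDim := height_le (hP.ker (hY.perp hX) f) hker
    _ < P.totalDim := totalDim_ker_lt hf
    _ = height X Y := hdim

end HeightStable

/-! ### Rigid stable representations are exceptional -/

namespace QuivRep

section Endomorphisms

variable {K : Type} [Field K] {V A : Type} {t h : A → V} {X : QuivRep K V A t h}

/-- The endomorphism algebra of a representation. -/
def endAlgebra (X : QuivRep K V A t h) : Subalgebra K (∀ i, Module.End K (X.sp i)) where
  carrier := homS X X
  add_mem' := (homS X X).add_mem
  mul_mem' {g f} hg hf := comp_mem_homS ⟨g, hg⟩ ⟨f, hf⟩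
  algebraMap_mem' c := mem_homS_iff.2 fun a x => ((X.map a).map_smul c x).symm

theorem homDim_dvd_dimVec [Finite V] (hX : IsDomain X.endAlgebra) (i : V) :
    homDim X X ∣ X.dimVec i := by
  have : FiniteDimensional K X.endAlgebra :=
    inferInstanceAs (FiniteDimensional K (Subalgebra.toSubmodule X.endAlgebra))
  let _ := divisionRingOfFiniteDimensional K X.endAlgebra
  let evalAt : X.endAlgebra →+* Module.End K (X.sp i) :=
    (Pi.evalRingHom _ i).comp X.endAlgebra.val.toRingHom
  let _ : Module X.endAlgebra (X.sp i) := Module.compHom _ evalAt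
  have : IsScalarTower K X.endAlgebra (X.sp i) := ⟨fun _ _ _ => rfl⟩
  exact ⟨_, (Module.finrank_mul_finrank K X.endAlgebra (X.sp i)).symm⟩

theorem IsRigid.isSchur [Finite V] [Finite A] (hX : X.IsRigid) (hdom : IsDomain X.endAlgebra) :
    X.IsSchur := by
  have := Fintype.ofFinite V
  have := Fintype.ofFinite A
  have homDim_ne : homDim X X ≠ 0 := fun h₀ =>
    one_ne_zero (α := X.endAlgebra) <| Subtype.ext <| (Submodule.mem_bot K).1 <|
      homDim_eq_zero_iff.1 h₀ ▸ X.endAlgebra.one_mem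
  choose γ hγ using homDim_dvd_dimVec hdom
  have euler : (homDim X X : ℤ) = homDim X X * (homDim X X * eulerForm t h (natZ γ) (natZ γ)) :=
    calc (homDim X X : ℤ) = eulerForm t h (natZ X.dimVec) (natZ X.dimVec) := by
          rw [eulerForm_dimVec, show extDim X X = 0 from hX, Nat.cast_zero, sub_zero]
      _ = _ := by
          simp only [eulerForm, natZ, hγ, Nat.cast_mul, mul_sub, Finset.mul_sum]
          congr! 2 <;> ring
  have unit : (homDim X X : ℤ) * eulerForm t h (natZ γ) (natZ γ) = 1 :=
    (mul_eq_left₀ (Nat.cast_ne_zero.2 homDim_ne)).1 euler.symm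
  exact_mod_cast Int.eq_one_of_mul_eq_one_right (Int.natCast_nonneg _) unit

end Endomorphisms

end QuivRep

section StableExceptional

open QuivRep

variable {K : Type} [Field K] {V A : Type} [Fintype V] {t h : A → V} {σ : V → ℤ}
  {X : QuivRep K V A t h}

theorem IsStable.isDomain_endAlgebra (hX : IsStable K σ X) : IsDomain X.endAlgebra := by
  have : Nontrivial X.endAlgebra := by
    obtain ⟨i, hi⟩ := Function.ne_iff.1 hX.2.1
    have := Module.nontrivial_of_finrank_pos (Nat.pos_of_ne_zero hi)
    exact ⟨0, 1, fun h₀ => zero_ne_one (congr_fun (congr_arg Subtype.val h₀) i)⟩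
  have : NoZeroDivisors X.endAlgebra := by
    refine ⟨fun {f g} hfg => or_iff_not_imp_left.2 fun hf => Subtype.ext (funext fun i => ?_)⟩
    have hinj := (hX.bijective_of_ne_zero hX (f := f) hf i).injective
    ext x
    refine hinj ?_
    simpa using LinearMap.congr_fun (congr_fun (congr_arg Subtype.val hfg) i) x
  exact NoZeroDivisors.to_isDomain _

theorem IsStable.isExceptional [Finite A] (hX : IsStable K σ X) (hrigid : X.IsRigid) :
    X.IsExceptional :=
  ⟨hrigid, hrigid.isSchur hX.isDomain_endAlgebra⟩

end StableExceptional

/-! ### Duality -/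

theorem dualMap_bijective {R M N : Type*} [CommSemiring R] [AddCommMonoid M] [Module R M]
    [Module.IsReflexive R M] [AddCommMonoid N] [Module R N] [Module.IsReflexive R N] :
    Function.Bijective (LinearMap.dualMap : (M →ₗ[R] N) → _) := by
  refine ⟨fun f g hfg => (Module.dualMap_dualMap_eq_iff R M).1 (congr_arg _ hfg), fun g => ?_⟩
  refine ⟨(Module.evalEquiv R N).symm.toLinearMap ∘ₗ g.dualMap ∘ₗ Module.Dual.eval R M, ?_⟩
  ext f x
  simp

namespace QuivRep

section Dual

variable {K : Type} [Field K] {V A : Type} {t h : A → V} {X Y : QuivRep K V A t h}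

/-- The dual representation, a representation of the opposite quiver. -/
@[reducible]
def dual (X : QuivRep K V A t h) : QuivRep K V A h t where
  sp i := Module.Dual K (X.sp i)
  map a := (X.map a).dualMap

theorem dimVec_dual (X : QuivRep K V A t h) : X.dual.dimVec = X.dimVec :=
  funext fun _ => Subspace.dual_finrank_eq

theorem dmap_dual (φ : ∀ i, X.sp i →ₗ[K] Y.sp i) :
    dmap Y.dual X.dual (fun i => (φ i).dualMap) = fun a => (-dmap X Y φ a).dualMap := by
  ext a g x
  exact (map_sub g _ _).symm.trans (congr_arg g (neg_sub _ _).symm)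

theorem extVanishes_dual_iff : ExtVanishes Y.dual X.dual ↔ ExtVanishes X Y := by
  have dual_vertices : Function.Surjective
      (Pi.map fun i => LinearMap.dualMap (R := K) (M₁ := X.sp i) (M₂ := Y.sp i)) :=
    .piMap fun i => (dualMap_bijective (M := X.sp i) (N := Y.sp i)).surjective
  have neg_dual_arrows : Function.Bijective
      (Pi.map fun a (ψ : X.sp (t a) →ₗ[K] Y.sp (h a)) => (-ψ).dualMap) :=
    .piMap fun a => (dualMap_bijective (M := X.sp (t a)) (N := Y.sp (h a))).comp
      (Equiv.neg _).bijective
  rw [ExtVanishes, ← dual_vertices.of_comp_iff, ExtVanishes,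
    ← Function.Surjective.of_comp_iff' neg_dual_arrows]
  exact iff_of_eq (congr_arg _ (funext dmap_dual))

/-- The subrepresentation of `X` annihilated by a subrepresentation of its dual. -/
def Sub.coannihilator (U : Sub X.dual) : Sub X where
  sub i := (U.sub i).dualCoannihilator
  le a _ hx := (Submodule.mem_dualCoannihilator _).2 fun f hf =>
    (Submodule.mem_dualCoannihilator _).1 hx _ (U.le a f hf)

theorem Sub.dimVec_coannihilator (U : Sub X.dual) (i : V) :
    U.dimVec i + U.coannihilator.dimVec i = X.dimVec i :=
  Subspace.finrank_add_finrank_dualCoannihilator_eq _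

end Dual

end QuivRep

section DualStable

open QuivRep

variable {K : Type} [Field K] {V A : Type} [Fintype V] {t h : A → V} {σ : V → ℤ}
  {X : QuivRep K V A t h}

theorem IsStable.dual (hX : IsStable K σ X) : IsStable K (-σ) X.dual := by
  refine ⟨by simpa [dimVec_dual] using hX.1, by simpa only [dimVec_dual] using hX.2.1,
    fun U hU₀ hU₁ => ?_⟩
  have dim_add := U.dimVec_coannihilator
  have weights : ∑ i, (-σ) i * (U.dimVec i : ℤ) = ∑ i, σ i * (U.coannihilator.dimVec i : ℤ) := by
    rw [← sub_eq_zero, ← Finset.sum_sub_distrib, ← neg_eq_zero, ← hX.1, ← Finset.sum_neg_distrib]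
    refine Finset.sum_congr rfl fun i _ => ?_
    rw [← dim_add, Pi.neg_apply]
    push_cast
    ring
  rw [weights]
  refine hX.2.2 _ (fun h₀ => hU₁ (funext fun i => ?_)) (fun h₁ => hU₀ (funext fun i => ?_))
  · rw [dimVec_dual, ← dim_add, h₀, add_zero]
  · have := dim_add i
    rw [h₁] at this
    omega

end DualStable

/-! ### Ordering the stable representations -/

section Ordering

open QuivRep

variable {K : Type} [Field K] {V A : Type} [Fintype V] [Fintype A] {t h : A → V} {σ : V → ℤ}

theorem exists_order_of_not_extVanishes [DecidableEq V] (hQ : Acyclic t h)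
    {X : QuivRep K V A t h} (hX : X.IsRigid)
    (hσ : σ = weightL t h (natZ X.dimVec) ∨ σ = weightR t h (natZ X.dimVec)) :
    ∃ p : QuivRep K V A t h → ℤ, ∀ Y Z, IsStable K σ Y → IsStable K σ Z →
      ¬ ExtVanishes Y Z → p Z < p Y := by
  rcases hσ with rfl | rfl
  · exact ⟨fun Y => height X Y, fun Y Z hY hZ hYZ => Nat.cast_lt.2 (hY.height_lt hQ hX hZ hYZ)⟩
  · have hX_dual : X.dual.IsRigid :=
      extDim_eq_zero_iff.2 (extVanishes_dual_iff.2 (extDim_eq_zero_iff.1 hX))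
    have stable_dual {Y : QuivRep K V A t h} (hY : IsStable K (weightR t h (natZ X.dimVec)) Y) :
        IsStable K (weightL h t (natZ X.dual.dimVec)) Y.dual := by
      rw [dimVec_dual, weightL_swap]
      exact hY.dual
    refine ⟨fun Y => -height X.dual Y.dual, fun Y Z hY hZ hYZ => ?_⟩
    exact neg_lt_neg <| Nat.cast_lt.2 <| (stable_dual hZ).height_lt hQ.op hX_dual
      (stable_dual hY) (mt extVanishes_dual_iff.1 hYZ)

theorem isQES_of_isStable {l : ℕ} {E : Fin l → QuivRep K V A t h}
    (hstab : ∀ j, IsStable K σ (E j)) (hnoniso : ∀ j k, j ≠ k → ¬ RepIso K (E j) (E k))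
    (hext : ∀ i j, i ≤ j → ExtVanishes (E i) (E j)) : IsQES K t h fun j => (E j).dimVec := by
  have hom_eq {i j : Fin l} (hij : i ≠ j) : homDim (E i) (E j) = 0 :=
    homDim_eq_zero_iff.2 ((hstab i).homS_eq_bot (hstab j) (hnoniso i j hij))
  have ext_eq {i j : Fin l} (hij : i ≤ j) : extDim (E i) (E j) = 0 :=
    extDim_eq_zero_iff.2 (hext i j hij)
  refine ⟨fun j => ⟨E j, rfl, (hstab j).isExceptional (ext_eq le_rfl)⟩, fun i j hij => ⟨?_, ?_, ?_⟩⟩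
  · exact Nat.sInf_eq_zero.2 (.inl ⟨E i, E j, rfl, rfl, hom_eq hij.ne⟩)
  · exact Nat.sInf_eq_zero.2 (.inl ⟨E i, E j, rfl, rfl, ext_eq hij.le⟩)
  · rw [eulerForm_dimVec, hom_eq hij.ne']
    omega

end Ordering

theorem stmt4_general {K : Type} [Field K] {V A : Type} [Fintype V] [DecidableEq V] [Fintype A]
    (t h : A → V) (hQ : Acyclic t h) (α : V → ℕ)
    (hpre : ∃ X : QuivRep K V A t h, X.dimVec = α ∧ X.IsRigid)
    (σ : V → ℤ) (hσ : σ = weightL t h (natZ α) ∨ σ = weightR t h (natZ α))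
    (l : ℕ) (E : Fin l → QuivRep K V A t h)
    (hstab : ∀ j, IsStable K σ (E j))
    (hnoniso : ∀ j k, j ≠ k → ¬ RepIso K (E j) (E k)) :
    ∃ π : Equiv.Perm (Fin l), IsQES K t h (fun j => (E (π j)).dimVec) := by
  obtain ⟨X, rfl, hX⟩ := hpre
  obtain ⟨p, hp⟩ := exists_order_of_not_extVanishes hQ hX hσ
  let π := Tuple.sort (p ∘ E)
  refine ⟨π, isQES_of_isStable (fun j => hstab (π j))
    (fun j k hjk => hnoniso _ _ (π.injective.ne hjk)) fun i j hij => ?_⟩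
  by_contra hExt
  exact (Tuple.monotone_sort (p ∘ E) hij).not_gt (hp _ _ (hstab _) (hstab _) hExt)

/-- For non-zero pre-homogeneous `α`, `σ = ⟨α,·⟩` or `−⟨·,α⟩`, and
`E_1, …, E_l` the pairwise non-isomorphic `σ`-stable representations, the dimension
vectors `dim E_i` can be rearranged into a quiver exceptional sequence. -/
theorem stmt4 [IsAlgClosed K] [CharZero K] (t h : A → V) (hQ : Acyclic t h)
    (α : V → ℕ) (hα : α ≠ (fun _ => 0))
    (hpre : ∃ X : QuivRep K V A t h, X.dimVec = α ∧ X.IsRigid)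
    (σ : V → ℤ) (hσ : σ = weightL t h (natZ α) ∨ σ = weightR t h (natZ α))
    (l : ℕ) (E : Fin l → QuivRep K V A t h)
    (hstab : ∀ j, IsStable K σ (E j))
    (hnoniso : ∀ j k, j ≠ k → ¬ RepIso K (E j) (E k))
    (hall : ∀ W : QuivRep K V A t h, IsStable K σ W → ∃ j, RepIso K W (E j)) :
    ∃ π : Equiv.Perm (Fin l), IsQES K t h (fun j => (E (π j)).dimVec) :=
  stmt4_general t h hQ α hpre σ hσ l E hstab hnoniso

end
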